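/- Let X ∈ ℝ^{m×d} with rows x_1,…,x_m, let I', I'' partition [m], and let c_i ∈ [0,1/2) for each i. Define the 3PL loss f(Xη) = ∑_{i∈I'} g_{c_i}(x_i·η) + ∑_{i∈I''} h_{c_i}(x_i·η), and let X' be the submatrix with rows indexed by I'. Let μ ≥ 1 and assume: (a) for all η ∈ ℝ^d, ‖Xη‖₁ ≤ (1+μ)·‖(Xη)⁺‖₁; (b) for all η ∈ ℝ^d, ‖(Xη)⁺‖₁ ≤ (1+μ)·‖(X'η)⁺‖₁; (c) σ_min^{(1)}(X) := inf_{v ≠ 0} ‖Xv‖₁/‖v‖₁ > 0. Let ε ∈ (0,1/2) and let η_opt, η_core ∈ ℝ^d satisfy f(X·η_core) ≤ (1+3ε)·f(X·η_opt). Then ‖η_opt − η_core‖₁ ≤ ((1+μ)²·(2+3ε)/σ_min^{(1)}(X))·f(X·η_opt). -/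

import Mathlib

/-!
On `I'` the loss dominates the positive part of `x_i · η`, because `g_c(z) ≥ z` and `g_c ≥ 0`, and
on `I''` it is nonnegative. Chaining the two `μ`-conditions therefore gives
`‖Xη‖₁ ≤ (1+μ)² f(Xη)` for every `η` (`l1_le_loss`). Applying this to both `η_opt` and `η_core`,
the triangle inequality and `f(Xη_core) ≤ (1+3ε) f(Xη_opt)` bound `‖X(η_opt - η_core)‖₁` by
`(1+μ)² (2+3ε) f(Xη_opt)`, and `σ ‖v‖₁ ≤ ‖Xv‖₁` turns this into the parameter bound.
-/

open Finset Matrix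

/-- `g_c(z) = ln(1+e^z) - ln(1-c)`. -/
noncomputable def gfun (c z : ℝ) : ℝ := Real.log (1 + Real.exp z) - Real.log (1 - c)

/-- `h_c(z) = -ln(c + (1-c)/(1+e^{-z}))`. -/
noncomputable def hfun (c z : ℝ) : ℝ := -Real.log (c + (1 - c) / (1 + Real.exp (-z)))

lemma gfun_nonneg {c : ℝ} (hc : 0 ≤ c ∧ c < 1 / 2) (z : ℝ) : 0 ≤ gfun c z := by
  have h1 : Real.log (1 - c) ≤ 0 := Real.log_nonpos (by linarith) (by linarith)
  have h2 : 0 ≤ Real.log (1 + Real.exp z) := Real.log_nonneg (by linarith [Real.exp_pos z])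
  unfold gfun
  linarith

lemma le_gfun {c : ℝ} (hc : 0 ≤ c ∧ c < 1 / 2) (z : ℝ) : z ≤ gfun c z := by
  have h1 : Real.log (1 - c) ≤ 0 := Real.log_nonpos (by linarith) (by linarith)
  have h2 : z ≤ Real.log (1 + Real.exp z) := by
    rw [Real.le_log_iff_exp_le (by positivity)]
    linarith
  unfold gfun
  linarith

lemma hfun_nonneg {c : ℝ} (hc : 0 ≤ c ∧ c < 1 / 2) (z : ℝ) : 0 ≤ hfun c z := by
  have h1 : 0 ≤ (1 - c) / (1 + Real.exp (-z)) := div_nonneg (by linarith) (by positivity)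
  have h2 : (1 - c) / (1 + Real.exp (-z)) ≤ 1 - c :=
    div_le_self (by linarith) (by linarith [Real.exp_pos (-z)])
  unfold hfun
  have := Real.log_nonpos (x := c + (1 - c) / (1 + Real.exp (-z))) (by linarith) (by linarith)
  linarith

lemma pos_part_le_loss {m : ℕ} (I' I'' : Finset (Fin m)) (c : Fin m → ℝ)
    (hc : ∀ i, 0 ≤ c i ∧ c i < 1 / 2) (z : Fin m → ℝ) :
    ∑ i ∈ I'.filter (fun i => 0 ≤ z i), z i ≤
      (∑ i ∈ I', gfun (c i) (z i)) + ∑ i ∈ I'', hfun (c i) (z i) := by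
  have h1 : ∑ i ∈ I'.filter (fun i => 0 ≤ z i), z i ≤
      ∑ i ∈ I'.filter (fun i => 0 ≤ z i), gfun (c i) (z i) :=
    Finset.sum_le_sum fun i _ => le_gfun (hc i) (z i)
  have h2 : ∑ i ∈ I'.filter (fun i => 0 ≤ z i), gfun (c i) (z i) ≤
      ∑ i ∈ I', gfun (c i) (z i) :=
    Finset.sum_le_sum_of_subset_of_nonneg (Finset.filter_subset _ _)
      fun i _ _ => gfun_nonneg (hc i) (z i)
  have h3 : 0 ≤ ∑ i ∈ I'', hfun (c i) (z i) :=
    Finset.sum_nonneg fun i _ => hfun_nonneg (hc i) (z i)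
  linarith

/-- With `z = Xη`, the two `μ`-conditions bound `‖Xη‖₁` by `(1+μ)²` times the loss. -/
lemma l1_le_loss {m : ℕ} (I' I'' : Finset (Fin m)) (c : Fin m → ℝ)
    (hc : ∀ i, 0 ≤ c i ∧ c i < 1 / 2) {μ : ℝ} (hμ : 1 ≤ μ) (z : Fin m → ℝ)
    (ha : ∑ i, |z i| ≤ (1 + μ) * ∑ i ∈ Finset.univ.filter (fun i => 0 ≤ z i), z i)
    (hb : ∑ i ∈ Finset.univ.filter (fun i => 0 ≤ z i), z i ≤
      (1 + μ) * ∑ i ∈ I'.filter (fun i => 0 ≤ z i), z i) :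
    ∑ i, |z i| ≤
      (1 + μ) ^ 2 * ((∑ i ∈ I', gfun (c i) (z i)) + ∑ i ∈ I'', hfun (c i) (z i)) := by
  have hμ0 : 0 ≤ 1 + μ := by linarith
  calc _ ≤ _ := ha
    _ ≤ (1 + μ) * ((1 + μ) * ∑ i ∈ I'.filter (fun i => 0 ≤ z i), z i) :=
      mul_le_mul_of_nonneg_left hb hμ0
    _ = (1 + μ) ^ 2 * ∑ i ∈ I'.filter (fun i => 0 ≤ z i), z i := by ring
    _ ≤ _ := mul_le_mul_of_nonneg_left (pos_part_le_loss I' I'' c hc z) (by positivity)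

lemma sInf_mul_l1_le {m d : ℕ} (X : Fin m → Fin d → ℝ) (v : Fin d → ℝ) :
    sInf ((fun v : Fin d → ℝ => (∑ i, |X i ⬝ᵥ v|) / ∑ k, |v k|) '' {v | v ≠ 0}) * ∑ k, |v k| ≤
      ∑ i, |X i ⬝ᵥ v| := by
  by_cases hv : v = 0
  · simp [hv]
  · obtain ⟨k, hk⟩ := Function.ne_iff.mp hv
    have hpos : 0 < ∑ k, |v k| :=
      Finset.sum_pos' (fun _ _ => abs_nonneg _) ⟨k, Finset.mem_univ _, abs_pos.mpr hk⟩
    rw [← le_div_iff₀ hpos]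
    refine csInf_le ⟨0, ?_⟩ ⟨v, hv, rfl⟩
    rintro _ ⟨w, _, rfl⟩
    positivity

/-- Parameter recovery guarantee for the 3PL loss
`f(Xη) = ∑_{i∈I'} g_{c_i}(x_i·η) + ∑_{i∈I''} h_{c_i}(x_i·η)`. -/
theorem stmt4 {m d : ℕ} (X : Fin m → Fin d → ℝ)
    (I' I'' : Finset (Fin m)) (hdisj : Disjoint I' I'') (hcover : I' ∪ I'' = Finset.univ)
    (c : Fin m → ℝ) (hc : ∀ i, 0 ≤ c i ∧ c i < 1 / 2)
    (μ : ℝ) (hμ : 1 ≤ μ)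
    (ha : ∀ η : Fin d → ℝ,
      ∑ i, |X i ⬝ᵥ η| ≤
        (1 + μ) * ∑ i ∈ Finset.univ.filter (fun i => 0 ≤ X i ⬝ᵥ η), X i ⬝ᵥ η)
    (hb : ∀ η : Fin d → ℝ,
      ∑ i ∈ Finset.univ.filter (fun i => 0 ≤ X i ⬝ᵥ η), X i ⬝ᵥ η ≤
        (1 + μ) * ∑ i ∈ I'.filter (fun i => 0 ≤ X i ⬝ᵥ η), X i ⬝ᵥ η)
    (σ : ℝ)
    (hσ : σ = sInf ((fun v : Fin d → ℝ =>
      (∑ i, |X i ⬝ᵥ v|) / ∑ k, |v k|) '' {v | v ≠ 0}))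
    (hσpos : 0 < σ)
    (ε : ℝ) (hε0 : 0 < ε) (hε : ε < 1 / 2)
    (ηopt ηcore : Fin d → ℝ)
    (hcore :
      (∑ i ∈ I', gfun (c i) (X i ⬝ᵥ ηcore)) + ∑ i ∈ I'', hfun (c i) (X i ⬝ᵥ ηcore) ≤
        (1 + 3 * ε) *
          ((∑ i ∈ I', gfun (c i) (X i ⬝ᵥ ηopt)) +
            ∑ i ∈ I'', hfun (c i) (X i ⬝ᵥ ηopt))) :
    ∑ k, |ηopt k - ηcore k| ≤
      ((1 + μ) ^ 2 * (2 + 3 * ε) / σ) *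
        ((∑ i ∈ I', gfun (c i) (X i ⬝ᵥ ηopt)) +
          ∑ i ∈ I'', hfun (c i) (X i ⬝ᵥ ηopt)) := by
  have h1 := l1_le_loss I' I'' c hc hμ (fun i => X i ⬝ᵥ ηopt) (ha ηopt) (hb ηopt)
  have h2 := l1_le_loss I' I'' c hc hμ (fun i => X i ⬝ᵥ ηcore) (ha ηcore) (hb ηcore)
  have h3 : ∑ i, |X i ⬝ᵥ (ηopt - ηcore)| ≤ ∑ i, |X i ⬝ᵥ ηopt| + ∑ i, |X i ⬝ᵥ ηcore| := by
    rw [← Finset.sum_add_distrib]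
    refine Finset.sum_le_sum fun i _ => ?_
    rw [dotProduct_sub]
    exact abs_sub _ _
  have h4 := sInf_mul_l1_le X (ηopt - ηcore)
  rw [← hσ] at h4
  simp only [Pi.sub_apply] at h4
  have h5 := mul_le_mul_of_nonneg_left hcore (sq_nonneg (1 + μ))
  rw [div_mul_eq_mul_div, le_div_iff₀ hσpos]
  linarith
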